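/- arXiv:2205.08854 — 2 statements merged into one kernel-verified Lean document; each statement's English description precedes it below -/
import Mathlib

section
/- Let L be a rational subset of F. Then there exist integers n' ≥ n ≥ 1 and subsets W, W' ⊆ W_{n'} such that L = {u ∈ F⁺ : ζ_{n,n'}(u) ∈ W} ∪ {u ∈ F : u⁻¹ ∈ F⁺ and ζ_{n,n'}(u⁻¹) ∈ W'}. -/
/-!
A rational subset of `F` is the set of labels of the runs of a finite automaton whose edges carry
labels `0, ±1`, read as `1`, `a`, `a⁻¹` (`recognized_of_isRat`).  The label of a run records a walk
on `ℤ`: the leftmost point, the end point and the rightmost point.  So `u ∈ L` says that some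
accepting walk from `0` to `u.p` has range exactly `[u.l, u.r]`.

For `u.p ≥ 0` use the coordinates `x = -u.l`, `p = u.p`, `s = u.r - u.p` (`Mem L x p s`).  The heart
of the proof is a crossing-sequence argument (`Walk.cut`).  Cut the line at `0`.  What happens to
the left of `0` matters to the rest of a walk only through finite data `Ent`: which pairs of states
are joined by a loop at `0` inside `[-x, 0]`, with or without touching `-x`, and in which states the
walk can first be led to `0` from its start.  If two left parts have the same data, walks over one
can be replaced by walks over the other.  Applied after a translation by `1`, the same lemma shows
that the data of a left part determine the data of that part lengthened by one cell
(`loop_succ`, `ent_succ`).  The data are thus the orbit of a self-map of a finite set, hence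
ultimately periodic, with a threshold and a period that do not depend on the starting point
(`exists_uniform_period`).  This gives periodicity in `x` (`walk_period_x`) and in `p`
(`walk_period_p`).  The anti-automorphism reversing words exchanges `x` and `s` and preserves
rationality, so it gives periodicity in `s`; the anti-automorphism `u ↦ u⁻¹` reduces the case
`u.p ≤ 0` to the case `u.p ≥ 0`.

Once membership in `L` is periodic in each coordinate with period `n` from `n' - n` on, replacing
each coordinate by its image under `η` does not affect it, so `W` and `W'` can be taken to be the
parts of `L` and of `L⁻¹` lying in `W_{n'}`.
-/

open Pointwise

/-- The monogenic free inverse monoid `F`, realized concretely as the monoid of triples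
`u = (uλ, uπ, uρ) ∈ ℤ³` with `uλ ≤ 0 ≤ uρ` and `uλ ≤ uπ ≤ uρ`. -/
@[ext]
structure F where
  l : ℤ
  p : ℤ
  r : ℤ
  hl : l ≤ 0
  hr : 0 ≤ r
  hlp : l ≤ p
  hpr : p ≤ r

namespace F

instance : Mul F where
  mul u v := ⟨min u.l (u.p + v.l), u.p + v.p, max u.r (u.p + v.r),
    by have h1 := u.hl; have h2 := v.hl; omega,
    by have h1 := u.hr; have h2 := v.hr; omega,
    by have h1 := u.hlp; have h2 := v.hlp; omega,
    by have h1 := u.hpr; have h2 := v.hpr; omega⟩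

instance : One F where
  one := ⟨0, 0, 0, le_refl 0, le_refl 0, le_refl 0, le_refl 0⟩

@[simp] theorem mul_l (u v : F) : (u * v).l = min u.l (u.p + v.l) := rfl
@[simp] theorem mul_p (u v : F) : (u * v).p = u.p + v.p := rfl
@[simp] theorem mul_r (u v : F) : (u * v).r = max u.r (u.p + v.r) := rfl
@[simp] theorem one_l : (1 : F).l = 0 := rfl
@[simp] theorem one_p : (1 : F).p = 0 := rfl
@[simp] theorem one_r : (1 : F).r = 0 := rfl

instance : Monoid F where
  mul_assoc u v w := by ext <;> simp <;> omega
  one_mul u := by have := u.hl; have := u.hr; ext <;> simp <;> omega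
  mul_one u := by have := u.hlp; have := u.hpr; ext <;> simp <;> omega

/-- The generator `a = (0,1,1)` of `F`. -/
def a : F := ⟨0, 1, 1, by omega, by omega, by omega, by omega⟩

/-- The inverse `a⁻¹ = (-1,-1,0)` of the generator. -/
def ainv : F := ⟨-1, -1, 0, by omega, by omega, by omega, by omega⟩

/-- Inversion in `F`: `u⁻¹ = (uλ - uπ, -uπ, uρ - uπ)`. -/
def inv (u : F) : F := ⟨u.l - u.p, -u.p, u.r - u.p,
  by have := u.hlp; omega, by have := u.hpr; omega,
  by have := u.hl; omega, by have := u.hr; omega⟩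

/-- Rational subsets of `F`: the smallest family of subsets containing all finite subsets
and closed under binary union, setwise product, and star. -/
inductive IsRat : Set F → Prop
  | finite : ∀ S : Set F, S.Finite → IsRat S
  | union : ∀ S T : Set F, IsRat S → IsRat T → IsRat (S ∪ T)
  | mul : ∀ S T : Set F, IsRat S → IsRat T → IsRat (S * T)
  | star : ∀ S : Set F, IsRat S → IsRat (⋃ k : ℕ, S ^ k)

/-- The canonical homomorphism `θ` from the free monoid on the two-letter alphabet
`{a, a⁻¹}` (encoded as `Bool`: `true ↦ a`, `false ↦ a⁻¹`) onto `F`. -/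
def theta : FreeMonoid Bool →* F := FreeMonoid.lift fun b => bif b then a else ainv

end F

/-- The specification of the map `η_{n,n'} : ℤ → ℤ`:
`η(m) = m` if `0 ≤ m < n'`; `η(m) = max{i : 0 ≤ i ≤ n'-1, i ≡ m (mod n)}` if `m ≥ n'`;
and `η(-m) = -η(m)` for `m ≥ 0`. -/
def EtaSpec (n n' : ℤ) (η : ℤ → ℤ) : Prop :=
  (∀ m : ℤ, 0 ≤ m → m < n' → η m = m) ∧
  (∀ m : ℤ, n' ≤ m → IsGreatest {i : ℤ | 0 ≤ i ∧ i ≤ n' - 1 ∧ i ≡ m [ZMOD n]} (η m)) ∧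
  (∀ m : ℤ, 0 ≤ m → η (-m) = -η m)

/-- `v = ζ_{n,n'}(u)`, expressed through components: `vλ = η(uλ)`, `vπ = η(uπ)` and
`vρ - vπ = η(uρ - uπ)` (for `u ∈ F⁺`, where `η` satisfies `EtaSpec`). -/
def ZetaRel (η : ℤ → ℤ) (u v : F) : Prop :=
  v.l = η u.l ∧ v.p = η u.p ∧ v.r - v.p = η (u.r - u.p)

/-- Membership in `W_{n'} = {u ∈ F : uλ > -n', 0 ≤ uπ < n', uρ - uπ < n'}`. -/
def InW (n' : ℤ) (u : F) : Prop :=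
  -n' < u.l ∧ 0 ≤ u.p ∧ u.p < n' ∧ u.r - u.p < n'

namespace F

/-! ### Finite automata over `F` -/

/-- The element of `F` for a single move by `d`; it is `1`, `a`, `a⁻¹` for `d = 0, 1, -1`. -/
def gen (d : ℤ) : F := ⟨min 0 d, d, max 0 d, by omega, by omega, by omega, by omega⟩

@[simp] theorem gen_l (d : ℤ) : (gen d).l = min 0 d := rfl
@[simp] theorem gen_p (d : ℤ) : (gen d).p = d := rfl
@[simp] theorem gen_r (d : ℤ) : (gen d).r = max 0 d := rfl

/-- `Run E q u q'`: in the automaton with labelled edges `E` there is a path from `q` to `q'`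
whose label, multiplied out in `F`, is `u`.  Only edges with label in `{-1, 0, 1}` are used. -/
inductive Run {Q : Type} (E : Q → ℤ → Q → Prop) (q : Q) : F → Q → Prop
  | nil : Run E q 1 q
  | step {u : F} {d : ℤ} {q' q'' : Q} : Run E q u q' → E q' d q'' → -1 ≤ d → d ≤ 1 →
      Run E q (u * gen d) q''

theorem gen_zero : gen 0 = 1 := by ext <;> simp

theorem Run.trans {Q : Type} {E : Q → ℤ → Q → Prop} {q q' q'' : Q} {u v : F}
    (h : Run E q u q') (k : Run E q' v q'') : Run E q (u * v) q'' := by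
  induction k with
  | nil => simpa using h
  | step _ e h1 h2 ih => rw [← mul_assoc]; exact ih.step e h1 h2

theorem Run.map {Q Q' : Type} {E : Q → ℤ → Q → Prop} {E' : Q' → ℤ → Q' → Prop} (f : Q → Q')
    (hf : ∀ q d q', E q d q' → E' (f q) d (f q')) {q q' : Q} {u : F}
    (h : Run E q u q') : Run E' (f q) u (f q') := by
  induction h with
  | nil => exact .nil
  | step _ e h1 h2 ih => exact ih.step (hf _ _ _ e) h1 h2

theorem Run.silent {Q : Type} {E : Q → ℤ → Q → Prop} {q q' q'' : Q} {u : F}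
    (h : Run E q u q') (e : E q' 0 q'') : Run E q u q'' := by
  have := h.step e (by omega) (by omega)
  rwa [gen_zero, mul_one] at this

/-- `L` is the set of labels of runs of a finite automaton from an initial to a final state. -/
def Recognized (L : Set F) : Prop :=
  ∃ (Q : Type) (_ : Finite Q) (E : Q → ℤ → Q → Prop) (I T : Set Q),
    ∀ u, u ∈ L ↔ ∃ i ∈ I, ∃ t ∈ T, Run E i u t

theorem recognized_empty : Recognized ∅ :=
  ⟨Unit, inferInstance, fun _ _ _ => False, ∅, ∅, by simp⟩

theorem recognized_one : Recognized {1} := by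
  refine ⟨Unit, inferInstance, fun _ _ _ => False, Set.univ, Set.univ, fun u => ?_⟩
  constructor
  · rintro rfl; exact ⟨(), trivial, (), trivial, .nil⟩
  · rintro ⟨i, -, t, -, h⟩
    cases h with
    | nil => rfl
    | step _ e => exact e.elim

theorem recognized_gen (d : ℤ) (h1 : -1 ≤ d) (h2 : d ≤ 1) : Recognized {gen d} := by
  refine ⟨Bool, inferInstance, fun b c b' => b = false ∧ b' = true ∧ c = d, {false}, {true},
    fun u => ?_⟩
  constructor
  · rintro rfl
    refine ⟨false, rfl, true, rfl, ?_⟩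
    have := (Run.nil (E := fun (b : Bool) (c : ℤ) (b' : Bool) => b = false ∧ b' = true ∧ c = d)
      (q := false)).step (d := d) (q'' := true) ⟨rfl, rfl, rfl⟩ h1 h2
    rwa [one_mul] at this
  · rintro ⟨i, rfl, t, rfl, h⟩
    -- the invariant excludes a second edge
    have key : ∀ u b, Run (fun (b : Bool) (c : ℤ) (b' : Bool) => b = false ∧ b' = true ∧ c = d)
        false u b → (b = false → u = 1) ∧ (b = true → u = gen d) := by
      intro u b h
      induction h with
      | nil => simp
      | step _ e _ _ ih =>
        obtain ⟨rfl, rfl, rfl⟩ := e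
        simp [ih.1 rfl]
    exact (key _ _ h).2 rfl

theorem Recognized.union {S T : Set F} (hS : Recognized S) (hT : Recognized T) :
    Recognized (S ∪ T) := by
  obtain ⟨Q₁, _, E₁, I₁, T₁, h₁⟩ := hS
  obtain ⟨Q₂, _, E₂, I₂, T₂, h₂⟩ := hT
  let E : Q₁ ⊕ Q₂ → ℤ → Q₁ ⊕ Q₂ → Prop := fun q d q' => match q, q' with
    | .inl q, .inl q' => E₁ q d q'
    | .inr q, .inr q' => E₂ q d q'
    | _, _ => False
  refine ⟨Q₁ ⊕ Q₂, inferInstance, E, Sum.inl '' I₁ ∪ Sum.inr '' I₂,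
    Sum.inl '' T₁ ∪ Sum.inr '' T₂, fun u => ?_⟩
  have k₁ : ∀ i u q, Run E (.inl i) u q → ∃ q', q = .inl q' ∧ Run E₁ i u q' := by
    intro i u q h
    induction h with
    | nil => exact ⟨i, rfl, .nil⟩
    | @step _ _ _ q'' _ e a b ih =>
      obtain ⟨q', rfl, ih⟩ := ih
      rcases q'' with q'' | q''
      · exact ⟨q'', rfl, ih.step e a b⟩
      · exact e.elim
  have k₂ : ∀ i u q, Run E (.inr i) u q → ∃ q', q = .inr q' ∧ Run E₂ i u q' := by
    intro i u q h
    induction h with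
    | nil => exact ⟨i, rfl, .nil⟩
    | @step _ _ _ q'' _ e a b ih =>
      obtain ⟨q', rfl, ih⟩ := ih
      rcases q'' with q'' | q''
      · exact e.elim
      · exact ⟨q'', rfl, ih.step e a b⟩
  constructor
  · rintro (h | h)
    · obtain ⟨i, hi, t, ht, h⟩ := (h₁ u).1 h
      exact ⟨.inl i, .inl ⟨i, hi, rfl⟩, .inl t, .inl ⟨t, ht, rfl⟩,
        h.map (E' := E) Sum.inl fun _ _ _ e => e⟩
    · obtain ⟨i, hi, t, ht, h⟩ := (h₂ u).1 h
      exact ⟨.inr i, .inr ⟨i, hi, rfl⟩, .inr t, .inr ⟨t, ht, rfl⟩,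
        h.map (E' := E) Sum.inr fun _ _ _ e => e⟩
  · rintro ⟨_, ⟨i, hi, rfl⟩ | ⟨i, hi, rfl⟩, t, ht, h⟩
    · obtain ⟨q', rfl, r⟩ := k₁ _ _ _ h
      exact .inl ((h₁ u).2 ⟨i, hi, q', by simpa using ht, r⟩)
    · obtain ⟨q', rfl, r⟩ := k₂ _ _ _ h
      exact .inr ((h₂ u).2 ⟨i, hi, q', by simpa using ht, r⟩)

theorem Recognized.mul {S T : Set F} (hS : Recognized S) (hT : Recognized T) :
    Recognized (S * T) := by
  obtain ⟨Q₁, _, E₁, I₁, T₁, h₁⟩ := hS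
  obtain ⟨Q₂, _, E₂, I₂, T₂, h₂⟩ := hT
  let E : Q₁ ⊕ Q₂ → ℤ → Q₁ ⊕ Q₂ → Prop := fun q d q' => match q, q' with
    | .inl q, .inl q' => E₁ q d q'
    | .inr q, .inr q' => E₂ q d q'
    | .inl q, .inr q' => q ∈ T₁ ∧ q' ∈ I₂ ∧ d = 0
    | .inr _, .inl _ => False
  refine ⟨Q₁ ⊕ Q₂, inferInstance, E, Sum.inl '' I₁, Sum.inr '' T₂, fun u => ?_⟩
  have k : ∀ i ∈ I₁, ∀ u q, Run E (.inl i) u q → (∀ q', q = .inl q' → Run E₁ i u q') ∧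
      (∀ q', q = .inr q' → ∃ v ∈ S, ∃ w, u = v * w ∧ ∃ j ∈ I₂, Run E₂ j w q') := by
    intro i hi u q h
    induction h with
    | nil => exact ⟨by rintro _ ⟨⟩; exact .nil, by rintro _ ⟨⟩⟩
    | @step u d q q'' _ e a b ih =>
      rcases q with q | q <;> rcases q'' with q'' | q''
      · refine ⟨?_, by rintro _ ⟨⟩⟩
        rintro _ ⟨⟩
        exact (ih.1 q rfl).step e a b
      · refine ⟨by rintro _ ⟨⟩, ?_⟩
        rintro _ ⟨⟩
        obtain ⟨e1, e2, rfl⟩ := e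
        refine ⟨u, (h₁ u).2 ⟨i, hi, q, e1, ih.1 q rfl⟩, 1, by simp [gen_zero], q'', e2, .nil⟩
      · exact e.elim
      · refine ⟨by rintro _ ⟨⟩, ?_⟩
        rintro _ ⟨⟩
        obtain ⟨v, hv, w, rfl, j, hj, r⟩ := ih.2 q rfl
        exact ⟨v, hv, w * gen d, by rw [mul_assoc], j, hj, r.step e a b⟩
  constructor
  · rintro ⟨v, hv, w, hw, rfl⟩
    obtain ⟨i, hi, t, ht, h⟩ := (h₁ v).1 hv
    obtain ⟨i', hi', t', ht', h'⟩ := (h₂ w).1 hw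
    refine ⟨.inl i, ⟨i, hi, rfl⟩, .inr t', ⟨t', ht', rfl⟩, ?_⟩
    have r₁ := (h.map (E' := E) Sum.inl fun _ _ _ e => e).silent (q'' := .inr i')
      (show E (.inl t) 0 (.inr i') from ⟨ht, hi', rfl⟩)
    exact r₁.trans (h'.map (E' := E) Sum.inr fun _ _ _ e => e)
  · rintro ⟨_, ⟨i, hi, rfl⟩, _, ⟨t, ht, rfl⟩, h⟩
    obtain ⟨v, hv, w, rfl, j, hj, r⟩ := (k i hi _ _ h).2 t rfl
    exact Set.mul_mem_mul hv ((h₂ w).2 ⟨j, hj, t, ht, r⟩)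

theorem Recognized.star {S : Set F} (hS : Recognized S) : Recognized (⋃ k : ℕ, S ^ k) := by
  obtain ⟨Q, _, E₁, I, T, h₁⟩ := hS
  -- the extra state `none` is visited between consecutive factors
  let E : Option Q → ℤ → Option Q → Prop := fun q d q' => match q, q' with
    | some q, some q' => E₁ q d q'
    | none, some q' => q' ∈ I ∧ d = 0
    | some q, none => q ∈ T ∧ d = 0
    | none, none => False
  refine ⟨Option Q, inferInstance, E, {none}, {none}, fun u => ?_⟩
  have k : ∀ u q, Run E none u q → (q = none → ∃ k : ℕ, u ∈ S ^ k) ∧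
      (∀ q', q = some q' → ∃ k : ℕ, ∃ v ∈ S ^ k, ∃ w, u = v * w ∧ ∃ j ∈ I, Run E₁ j w q') := by
    intro u q h
    induction h with
    | nil => exact ⟨fun _ => ⟨0, by simp⟩, by rintro _ ⟨⟩⟩
    | @step u d q q'' _ e a b ih =>
      rcases q with _ | q <;> rcases q'' with _ | q''
      · exact e.elim
      · refine ⟨by rintro ⟨⟩, ?_⟩
        rintro _ ⟨⟩
        obtain ⟨e1, rfl⟩ := e
        obtain ⟨k, hk⟩ := ih.1 rfl
        exact ⟨k, u, hk, 1, by simp [gen_zero], q'', e1, .nil⟩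
      · refine ⟨fun _ => ?_, by rintro _ ⟨⟩⟩
        obtain ⟨e1, rfl⟩ := e
        obtain ⟨k, v, hv, w, rfl, j, hj, r⟩ := ih.2 q rfl
        refine ⟨k + 1, ?_⟩
        rw [gen_zero, mul_one, pow_succ]
        exact Set.mul_mem_mul hv ((h₁ w).2 ⟨j, hj, q, e1, r⟩)
      · refine ⟨by rintro ⟨⟩, ?_⟩
        rintro _ ⟨⟩
        obtain ⟨k, v, hv, w, rfl, j, hj, r⟩ := ih.2 q rfl
        exact ⟨k, v, hv, w * gen d, by rw [mul_assoc], j, hj, r.step e a b⟩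
  rw [Set.mem_iUnion]
  constructor
  · rintro ⟨k, hk⟩
    refine ⟨none, rfl, none, rfl, ?_⟩
    induction k generalizing u with
    | zero =>
      rw [pow_zero, Set.mem_one] at hk
      subst hk
      exact .nil
    | succ k ih =>
      rw [pow_succ] at hk
      obtain ⟨v, hv, w, hw, rfl⟩ := hk
      obtain ⟨i, hi, t, ht, h⟩ := (h₁ w).1 hw
      have r₁ := (ih v hv).silent (q'' := some i) ⟨hi, rfl⟩
      have r₂ := (h.map (E' := E) some fun _ _ _ e => e).silent (q'' := none) ⟨ht, rfl⟩
      exact r₁.trans r₂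
  · rintro ⟨_, rfl, _, rfl, h⟩
    exact (k _ _ h).1 rfl

theorem gen_one_pow (k : ℕ) :
    (gen 1 ^ k).l = 0 ∧ (gen 1 ^ k).p = k ∧ (gen 1 ^ k).r = k := by
  induction k with
  | zero => simp
  | succ k ih =>
    obtain ⟨h1, h2, h3⟩ := ih
    rw [pow_succ]
    simp [h1, h2, h3]

theorem gen_neg_one_pow (k : ℕ) :
    (gen (-1) ^ k).l = -k ∧ (gen (-1) ^ k).p = -k ∧ (gen (-1) ^ k).r = 0 := by
  induction k with
  | zero => simp
  | succ k ih =>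
    obtain ⟨h1, h2, h3⟩ := ih
    rw [pow_succ]
    simp [h1, h2, h3]
    omega

/-- Go down to the minimum, up to the maximum, and back to the end point. -/
theorem eq_prod_gen (u : F) : u = gen (-1) ^ (-u.l).toNat * gen 1 ^ (u.r - u.l).toNat *
    gen (-1) ^ (u.r - u.p).toNat := by
  have a1 := u.hl
  have a2 := u.hr
  have a3 := u.hlp
  have a4 := u.hpr
  obtain ⟨h1, h2, h3⟩ := gen_neg_one_pow (-u.l).toNat
  obtain ⟨i1, i2, i3⟩ := gen_one_pow (u.r - u.l).toNat
  obtain ⟨j1, j2, j3⟩ := gen_neg_one_pow (u.r - u.p).toNat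
  ext <;> simp only [mul_l, mul_p, mul_r, h1, h2, h3, i1, i2, i3, j1, j2, j3] <;> omega

theorem recognized_pow {u : F} (h : Recognized {u}) (k : ℕ) : Recognized {u ^ k} := by
  induction k with
  | zero => simpa using recognized_one
  | succ k ih => simpa [pow_succ] using ih.mul h

theorem recognized_singleton (u : F) : Recognized {u} := by
  have hd := recognized_gen (-1) (by omega) (by omega)
  have hu := recognized_gen 1 (by omega) (by omega)
  have := ((recognized_pow hd (-u.l).toNat).mul (recognized_pow hu (u.r - u.l).toNat)).mul
    (recognized_pow hd (u.r - u.p).toNat)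
  rw [Set.singleton_mul_singleton, Set.singleton_mul_singleton, ← eq_prod_gen u] at this
  exact this

theorem recognized_of_isRat {L : Set F} (h : IsRat L) : Recognized L := by
  induction h with
  | finite S hS =>
    induction S, hS using Set.Finite.induction_on with
    | empty => exact recognized_empty
    | @insert u S _ _ ih => exact (recognized_singleton u).union ih
  | union S T _ _ h1 h2 => exact h1.union h2
  | mul S T _ _ h1 h2 => exact h1.mul h2
  | star S _ h => exact h.star

/-! ### Walks on the line and the cutting lemma -/

/-- `Walk E q i lo hi q' j`: some run from state `q` to state `q'`, read as a walk on `ℤ` starting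
at `i`, ends at `j` and has minimum exactly `lo` and maximum exactly `hi`. -/
def Walk {Q : Type} (E : Q → ℤ → Q → Prop) (q : Q) (i lo hi : ℤ) (q' : Q) (j : ℤ) : Prop :=
  ∃ u : F, Run E q u q' ∧ lo = i + u.l ∧ hi = i + u.r ∧ j = i + u.p

section
variable {Q : Type} {E : Q → ℤ → Q → Prop}

theorem Walk.nil (q : Q) (i : ℤ) : Walk E q i i i q i := ⟨1, .nil, by simp⟩

theorem Walk.step {q q' q'' : Q} {i lo hi j d : ℤ} (h : Walk E q i lo hi q' j)
    (e : E q' d q'') (h1 : -1 ≤ d) (h2 : d ≤ 1) :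
    Walk E q i (min lo (j + d)) (max hi (j + d)) q'' (j + d) := by
  obtain ⟨u, r, rfl, rfl, rfl⟩ := h
  have a1 := u.hlp
  have a2 := u.hpr
  refine ⟨_, r.step e h1 h2, ?_, ?_, ?_⟩ <;> simp <;> omega

theorem Walk.trans {q q' q'' : Q} {i lo hi j lo' hi' k : ℤ} (h : Walk E q i lo hi q' j)
    (h' : Walk E q' j lo' hi' q'' k) : Walk E q i (min lo lo') (max hi hi') q'' k := by
  obtain ⟨u, r, rfl, rfl, rfl⟩ := h
  obtain ⟨v, s, rfl, rfl, rfl⟩ := h'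
  refine ⟨_, r.trans s, ?_, ?_, ?_⟩ <;> simp <;> omega

theorem Walk.shift {q q' : Q} {i lo hi j : ℤ} (h : Walk E q i lo hi q' j) (c : ℤ) :
    Walk E q (i + c) (lo + c) (hi + c) q' (j + c) := by
  obtain ⟨u, r, rfl, rfl, rfl⟩ := h
  exact ⟨u, r, by omega, by omega, by omega⟩

theorem Walk.le {q q' : Q} {i lo hi j : ℤ} (h : Walk E q i lo hi q' j) :
    lo ≤ i ∧ i ≤ hi ∧ lo ≤ j ∧ j ≤ hi := by
  obtain ⟨u, r, rfl, rfl, rfl⟩ := h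
  have a1 := u.hlp
  have a2 := u.hpr
  have a3 := u.hl
  have a4 := u.hr
  omega

theorem Walk.induct {q : Q} {i : ℤ} {C : ℤ → ℤ → Q → ℤ → Prop} (h0 : C i i q i)
    (hs : ∀ lo hi q' j d q'', Walk E q i lo hi q' j → C lo hi q' j → E q' d q'' → -1 ≤ d →
      d ≤ 1 → C (min lo (j + d)) (max hi (j + d)) q'' (j + d))
    {lo hi : ℤ} {q' : Q} {j : ℤ} (h : Walk E q i lo hi q' j) : C lo hi q' j := by
  obtain ⟨u, r, rfl, rfl, rfl⟩ := h
  induction r with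
  | nil => simpa using h0
  | @step u d q' q'' r e h1 h2 ih =>
    have := hs _ _ _ _ d q'' ⟨u, r, rfl, rfl, rfl⟩ ih e h1 h2
    have a1 := u.hlp
    have a2 := u.hpr
    convert this using 1 <;> simp <;> omega

variable (E) in
/-- The states in which a walk with maximum `0`, starting in state `q` at `i`, can end at `0`
without going below `b` (first component), respectively with minimum exactly `b` (second). -/
def Ent (q : Q) (i b : ℤ) : Set Q × Set Q :=
  ({q' | ∃ lo, b ≤ lo ∧ Walk E q i lo 0 q' 0}, {q' | Walk E q i b 0 q' 0})

theorem Ent.transfer {q q' : Q} {i b i' b' lo : ℤ} (h : Ent E q i b = Ent E q i' b')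
    (hlo : b ≤ lo) (w : Walk E q i lo 0 q' 0) :
    ∃ lo', b' ≤ lo' ∧ (lo = b → lo' = b') ∧ Walk E q i' lo' 0 q' 0 := by
  by_cases hb : lo = b
  · have m : q' ∈ (Ent E q i b).2 := by subst hb; exact w
    rw [h] at m
    exact ⟨b', le_rfl, fun _ => rfl, m⟩
  · have m : q' ∈ (Ent E q i b).1 := ⟨lo, hlo, w⟩
    rw [h] at m
    obtain ⟨lo', h1, h2⟩ := m
    exact ⟨lo', h1, fun h => absurd h hb, h2⟩

/-- The cutting lemma: if two left parts `[b, 0]` and `[b', 0]` have the same loops at `0`, and the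
starting points either coincide and lie to the right of `0`, or are both `≤ 0` and have the same
entries at `0`, then a walk over the first left part that ends at `j ≥ 0` can be replaced by one
over the second, with the same maximum and touching `b'` if the given one touches `b`. -/
theorem Walk.cut {q₀ : Q} {i i' b b' : ℤ} (hb : b ≤ -1) (hb' : b' ≤ -1)
    (hT : ∀ q, Ent E q 0 b = Ent E q 0 b')
    (hS : (0 < i ∧ i = i') ∨ (i ≤ 0 ∧ i' ≤ 0 ∧ Ent E q₀ i b = Ent E q₀ i' b'))
    {lo hi : ℤ} {q : Q} {j : ℤ} (w : Walk E q₀ i lo hi q j) (hlo : b ≤ lo) (hj : 0 ≤ j) :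
    ∃ lo', b' ≤ lo' ∧ (lo = b → lo' = b') ∧ Walk E q₀ i' lo' hi q j := by
  let Good : ℤ → ℤ → Q → ℤ → Prop := fun lo hi q j =>
    ∃ lo', b' ≤ lo' ∧ (lo = b → lo' = b') ∧ Walk E q₀ i' lo' hi q j
  -- At a negative position, either `0` has not been reached yet, or the walk splits at its last
  -- visit to `0`, where the part before the split has already been replaced.
  suffices H : b ≤ lo → (0 ≤ j → Good lo hi q j) ∧ (j < 0 → hi < 0 ∨ ∃ q₁ lo₁ lo₂,
      Good lo₁ hi q₁ 0 ∧ Walk E q₁ 0 lo₂ 0 q j ∧ lo = min lo₁ lo₂) from (H hlo).1 hj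
  clear hlo hj
  refine Walk.induct (C := fun lo hi q j => b ≤ lo → (0 ≤ j → Good lo hi q j) ∧ (j < 0 → hi < 0 ∨
    ∃ q₁ lo₁ lo₂, Good lo₁ hi q₁ 0 ∧ Walk E q₁ 0 lo₂ 0 q j ∧ lo = min lo₁ lo₂)) ?_ ?_ w
  · intro hlo
    refine ⟨fun hj => ?_, fun hj => .inl hj⟩
    rcases hS with ⟨h1, rfl⟩ | ⟨h1, h2, h3⟩
    · exact ⟨i, by omega, by omega, Walk.nil _ _⟩
    · obtain rfl : i = 0 := by omega
      exact Ent.transfer h3 hlo (Walk.nil _ _)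
  · intro lo hi q j d q'' w ih e hd1 hd2 hlo
    replace ih := ih (by omega)
    have hw := w.le
    by_cases hj : 0 ≤ j
    · obtain ⟨lo', g1, g2, g3⟩ := ih.1 hj
      clear ih
      refine ⟨fun hjd => ⟨_, ?_, ?_, g3.step e hd1 hd2⟩, fun hjd => .inr ?_⟩
      · omega
      · intro h
        have := g2 (by omega)
        omega
      · obtain rfl : j = 0 := by omega
        obtain rfl : d = -1 := by omega
        refine ⟨q, lo, -1, ⟨lo', g1, g2, ?_⟩, ?_, ?_⟩
        · rwa [max_eq_left (by omega)]
        · simpa using (Walk.nil (E := E) q 0).step e hd1 hd2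
        · omega
    · replace ih := ih.2 (by omega)
      rcases ih with hh | ⟨q₁, lo₁, lo₂, ⟨lo', g1, g2, g3⟩, w₂, rfl⟩
      · refine ⟨fun hjd => ?_, fun hjd => .inl (by omega)⟩
        have hjd0 : j + d = 0 := by omega
        have w' := w.step e hd1 hd2
        rw [hjd0, max_eq_right (by omega : hi ≤ 0)] at w' ⊢
        rw [hjd0] at hlo
        rcases hS with ⟨h1, rfl⟩ | ⟨h1, h2, h3⟩
        · omega
        · exact Ent.transfer h3 hlo w'
      · have hg := g3.le
        have w₂' := w₂.step e hd1 hd2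
        have hw₂ := w₂.le
        rw [max_eq_left (by omega : j + d ≤ 0)] at w₂'
        refine ⟨fun hjd => ?_, fun hjd => .inr ?_⟩
        · have hjd0 : j + d = 0 := by omega
          rw [hjd0] at w₂' hlo ⊢
          obtain ⟨lo₃, t1, t2, t3⟩ := Ent.transfer (hT q₁) (by omega) w₂'
          refine ⟨min lo' lo₃, by omega, fun h => ?_, ?_⟩
          · by_cases hb1 : lo₁ = b
            · have := g2 hb1
              omega
            · have := t2 (by omega)
              omega
          · exact g3.trans t3
        · refine ⟨q₁, lo₁, min lo₂ (j + d), ⟨lo', g1, g2, ?_⟩, w₂', by omega⟩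
          rwa [max_eq_left (by omega)]

/-- Entries over a left part lengthened by one cell are, after translation, walks ending at `1`
with maximum `1`, to which the cutting lemma applies. -/
theorem ent_succ_aux {q : Q} {i i' b b' : ℤ} (hb : b ≤ -1) (hb' : b' ≤ -1)
    (hT : ∀ q, Ent E q 0 b = Ent E q 0 b')
    (hS : (0 < i ∧ i = i') ∨ (i ≤ 0 ∧ i' ≤ 0 ∧ Ent E q i b = Ent E q i' b')) :
    Ent E q (i - 1) (b - 1) ≤ Ent E q (i' - 1) (b' - 1) := by
  refine ⟨fun q' => ?_, fun q' => ?_⟩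
  · rintro ⟨lo, h1, w⟩
    have w1 := w.shift 1
    rw [sub_add_cancel, zero_add] at w1
    obtain ⟨lo', c1, c2, c3⟩ := w1.cut hb hb' hT hS (by omega) (by omega)
    refine ⟨lo' - 1, by omega, ?_⟩
    simpa [sub_eq_add_neg] using c3.shift (-1)
  · intro w
    have w1 := Walk.shift (show Walk E q (i - 1) (b - 1) 0 q' 0 from w) 1
    rw [sub_add_cancel, sub_add_cancel, zero_add] at w1
    obtain ⟨lo', c1, c2, c3⟩ := w1.cut hb hb' hT hS (by omega) (by omega)
    obtain rfl := c2 rfl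
    change Walk E q (i' - 1) (lo' - 1) 0 q' 0
    simpa [sub_eq_add_neg] using c3.shift (-1)

theorem loop_succ {b b' : ℤ} (hb : b ≤ -1) (hb' : b' ≤ -1)
    (hT : ∀ q, Ent E q 0 b = Ent E q 0 b') (q : Q) :
    Ent E q 0 (b - 1) = Ent E q 0 (b' - 1) := by
  have h1 := ent_succ_aux (q := q) (i := 1) (i' := 1) hb hb' hT (.inl ⟨by omega, rfl⟩)
  have h2 := ent_succ_aux (q := q) (i := 1) (i' := 1) hb' hb (fun q => (hT q).symm)
    (.inl ⟨by omega, rfl⟩)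
  rw [sub_self] at h1 h2
  exact le_antisymm h1 h2

theorem ent_succ {q : Q} {i i' b b' : ℤ} (hb : b ≤ -1) (hb' : b' ≤ -1) (hi : i ≤ 0) (hi' : i' ≤ 0)
    (hT : ∀ q, Ent E q 0 b = Ent E q 0 b') (hI : Ent E q i b = Ent E q i' b') :
    Ent E q (i - 1) (b - 1) = Ent E q (i' - 1) (b' - 1) :=
  le_antisymm (ent_succ_aux hb hb' hT (.inr ⟨hi, hi', hI⟩))
    (ent_succ_aux hb' hb (fun q => (hT q).symm) (.inr ⟨hi', hi, hI.symm⟩))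

end

/-! ### Ultimate periodicity -/

/-- Sequences in a finite set in which each term determines the next one by a common rule are
ultimately periodic, with common threshold and period. -/
theorem exists_uniform_period {X ι : Type} [Finite X] (σ : ι → ℕ → X)
    (h : ∀ x y k l, σ x k = σ y l → σ x (k + 1) = σ y (l + 1)) :
    ∃ N n : ℕ, 0 < n ∧ ∀ x k, N ≤ k → σ x (k + n) = σ x k := by
  classical
  have hΦ : ∃ Φ : X → X, ∀ x k, Φ (σ x k) = σ x (k + 1) := by
    have : ∀ t : X, ∃ t' : X, ∀ x k, σ x k = t → σ x (k + 1) = t' := by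
      intro t
      by_cases ht : ∃ x k, σ x k = t
      · obtain ⟨x, k, rfl⟩ := ht
        exact ⟨σ x (k + 1), fun y l e => h _ _ _ _ e⟩
      · exact ⟨t, fun x k e => absurd ⟨x, k, e⟩ ht⟩
    choose Φ hΦ using this
    exact ⟨Φ, fun x k => (hΦ _ x k rfl).symm⟩
  obtain ⟨Φ, hΦ⟩ := hΦ
  have it : ∀ x m k, σ x (k + m) = Φ^[m] (σ x k) := by
    intro x m k
    induction m with
    | zero => rfl
    | succ m ih => rw [Function.iterate_succ_apply', ← ih, hΦ]; rfl
  obtain ⟨c, d, hne, hcd⟩ := Finite.exists_ne_map_eq_of_infinite (fun k : ℕ => Φ^[k])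
  have main : ∀ c d : ℕ, c < d → Φ^[c] = Φ^[d] →
      ∃ N n : ℕ, 0 < n ∧ ∀ x k, N ≤ k → σ x (k + n) = σ x k := by
    intro c d hlt e
    refine ⟨c, d - c, by omega, fun x k hk => ?_⟩
    have e1 : k + (d - c) = (0 + d) + (k - c) := by omega
    have e2 : σ x k = σ x ((0 + c) + (k - c)) := by congr 1; omega
    rw [e1, it, it, e2, it, it, e]
  rcases lt_or_gt_of_ne hne with hlt | hlt
  · exact main c d hlt hcd
  · exact main d c hlt hcd.symm

section
variable {Q : Type} (E : Q → ℤ → Q → Prop)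

theorem walk_period_x [Finite Q] : ∃ N n : ℤ, 0 ≤ N ∧ 1 ≤ n ∧ ∀ x, N ≤ x → ∀ q hi q' j, 0 ≤ j →
    (Walk E q 0 (-x) hi q' j ↔ Walk E q 0 (-(x + n)) hi q' j) := by
  obtain ⟨N, n, hn, H⟩ := exists_uniform_period
    (fun (_ : Unit) (k : ℕ) (q : Q) => Ent E q 0 (-(k : ℤ) - 1)) (by
      intro _ _ k l e
      funext q
      have := loop_succ (by omega) (by omega) (fun q => congrFun e q) q
      push_cast
      convert this using 2 <;> ring)
  refine ⟨N + 1, n, by omega, by omega, fun x hx q hi q' j hj => ?_⟩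
  have e := H () (x - 1).toNat (by omega)
  have e1 : (-(((x - 1).toNat + n : ℕ) : ℤ) - 1) = -(x + n) := by omega
  have e2 : (-((x - 1).toNat : ℤ) - 1) = -x := by omega
  rw [e1, e2] at e
  have hT : ∀ q, Ent E q 0 (-x) = Ent E q 0 (-(x + n)) := fun q => (congrFun e q).symm
  constructor
  · intro w
    obtain ⟨lo', -, h, w'⟩ := w.cut (by omega) (by omega) hT
      (.inr ⟨le_rfl, le_rfl, hT q⟩) le_rfl hj
    rwa [h rfl] at w'
  · intro w
    obtain ⟨lo', -, h, w'⟩ := w.cut (by omega) (by omega) (fun q => (hT q).symm)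
      (.inr ⟨le_rfl, le_rfl, (hT q).symm⟩) le_rfl hj
    rwa [h rfl] at w'

/-- Here the cut is placed at the end point of the walk, so that the starting point is `-p`. -/
theorem walk_period_p [Finite Q] : ∃ N n : ℤ, 0 ≤ N ∧ 1 ≤ n ∧ ∀ p, N ≤ p → ∀ x s q q', 0 ≤ x →
    (Walk E q 0 (-x) (p + s) q' p ↔ Walk E q 0 (-x) ((p + n) + s) q' (p + n)) := by
  obtain ⟨N, n, hn, H⟩ := exists_uniform_period
    (fun (x : ℕ) (k : ℕ) (q : Q) => (Ent E q 0 (-(x : ℤ) - k - 1),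
      Ent E q (-(k : ℤ) - 1) (-(x : ℤ) - k - 1))) (by
      intro x y k l e
      have e1 : ∀ q, Ent E q 0 (-(x : ℤ) - k - 1) = Ent E q 0 (-(y : ℤ) - l - 1) :=
        fun q => congrArg Prod.fst (congrFun e q)
      have e2 : ∀ q, Ent E q (-(k : ℤ) - 1) (-(x : ℤ) - k - 1) =
        Ent E q (-(l : ℤ) - 1) (-(y : ℤ) - l - 1) := fun q => congrArg Prod.snd (congrFun e q)
      funext q
      have f1 := loop_succ (by omega) (by omega) e1 q
      have f2 := ent_succ (by omega) (by omega) (by omega) (by omega) e1 (e2 q)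
      have g1 : ∀ x k : ℕ, -(x : ℤ) - (k + 1 : ℕ) - 1 = -(x : ℤ) - k - 1 - 1 := by
        intros; push_cast; ring
      have g2 : ∀ k : ℕ, -((k + 1 : ℕ) : ℤ) - 1 = -(k : ℤ) - 1 - 1 := by
        intros; push_cast; ring
      simp only [g1, g2]
      exact Prod.ext f1 f2)
  refine ⟨N + 1, n, by omega, by omega, fun p hp x s q q' hx => ?_⟩
  have e := H x.toNat (p - 1).toNat (by omega)
  have e1 : (-(x.toNat : ℤ) - ((p - 1).toNat + n : ℕ) - 1) = -x - (p + n) := by omega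
  have e2 : (-(x.toNat : ℤ) - ((p - 1).toNat : ℕ) - 1) = -x - p := by omega
  have e3 : (-(((p - 1).toNat + n : ℕ) : ℤ) - 1) = -(p + n) := by omega
  have e4 : (-((p - 1).toNat : ℤ) - 1) = -p := by omega
  rw [e1, e2, e3, e4] at e
  have hT : ∀ q, Ent E q 0 (-x - p) = Ent E q 0 (-x - (p + n)) :=
    fun q => (congrArg Prod.fst (congrFun e q)).symm
  have hI : ∀ q, Ent E q (-p) (-x - p) = Ent E q (-(p + n)) (-x - (p + n)) :=
    fun q => (congrArg Prod.snd (congrFun e q)).symm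
  have recenter : ∀ p, Walk E q 0 (-x) (p + s) q' p ↔ Walk E q (-p) (-x - p) s q' 0 := by
    intro p
    constructor
    · intro w
      convert w.shift (-p) using 1 <;> ring
    · intro w
      convert w.shift p using 1 <;> ring
  rw [recenter, recenter]
  constructor
  · intro w
    obtain ⟨lo', -, h, w'⟩ := w.cut (by omega) (by omega) hT
      (.inr ⟨by omega, by omega, hI q⟩) le_rfl le_rfl
    rwa [h rfl] at w'
  · intro w
    obtain ⟨lo', -, h, w'⟩ := w.cut (by omega) (by omega) (fun q => (hT q).symm)
      (.inr ⟨by omega, by omega, (hI q).symm⟩) le_rfl le_rfl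
    rwa [h rfl] at w'

end

/-- Membership in `L` of the element with coordinates `x = -uλ`, `p = uπ`, `s = uρ - uπ`. -/
def Mem (L : Set F) (x p s : ℤ) : Prop := ∃ u ∈ L, u.l = -x ∧ u.p = p ∧ u.r = p + s

theorem mem_coord (L : Set F) (u : F) : Mem L (-u.l) u.p (u.r - u.p) ↔ u ∈ L := by
  constructor
  · rintro ⟨v, hv, h1, h2, h3⟩
    obtain rfl : v = u := by ext <;> omega
    exact hv
  · intro h
    exact ⟨u, h, by omega, rfl, by omega⟩

/-- `P` has period `n` from `N` on. -/
def Per (P : ℤ → Prop) (N n : ℤ) : Prop := ∀ m, N ≤ m → (P m ↔ P (m + n))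

theorem Per.add_mul {P : ℤ → Prop} {N n : ℤ} (hn : 1 ≤ n) (h : Per P N n) (k : ℕ) {m : ℤ}
    (hm : N ≤ m) : P m ↔ P (m + k * n) := by
  induction k with
  | zero => simp
  | succ k ih =>
    have h0 : 0 ≤ (k : ℤ) * n := by positivity
    refine ih.trans ((h (m + k * n) (by omega)).trans (iff_of_eq (congrArg P ?_)))
    push_cast
    ring

theorem Per.mono {P : ℤ → Prop} {N n N' n' : ℤ} (h : Per P N n) (hn : 1 ≤ n) (hN : N ≤ N')
    (hn' : 1 ≤ n') (hd : n ∣ n') : Per P N' n' := by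
  intro m hm
  obtain ⟨k, rfl⟩ := hd
  have hk : 0 ≤ k := by
    by_contra hk
    nlinarith
  lift k to ℕ using hk
  rw [mul_comm]
  exact h.add_mul hn k (hN.trans hm)

/-- Membership in the part of `L` in `F⁺` has period `n` from `N` on in each coordinate. -/
def UPer (L : Set F) (N n : ℤ) : Prop :=
  (∀ p s, 0 ≤ p → 0 ≤ s → Per (fun x => Mem L x p s) N n) ∧
  (∀ x s, 0 ≤ x → 0 ≤ s → Per (fun p => Mem L x p s) N n) ∧
  (∀ x p, 0 ≤ x → 0 ≤ p → Per (fun s => Mem L x p s) N n)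

theorem UPer.mono {L : Set F} {N n N' n' : ℤ} (h : UPer L N n) (hn : 1 ≤ n) (hN : N ≤ N')
    (hn' : 1 ≤ n') (hd : n ∣ n') : UPer L N' n' :=
  ⟨fun p s hp hs => (h.1 p s hp hs).mono hn hN hn' hd,
    fun x s hx hs => (h.2.1 x s hx hs).mono hn hN hn' hd,
    fun x p hx hp => (h.2.2 x p hx hp).mono hn hN hn' hd⟩

theorem mem_iff_walk {L : Set F} {Q : Type} {E : Q → ℤ → Q → Prop} {I T : Set Q}
    (h : ∀ u, u ∈ L ↔ ∃ i ∈ I, ∃ t ∈ T, Run E i u t) (x p s : ℤ) :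
    Mem L x p s ↔ ∃ i ∈ I, ∃ t ∈ T, Walk E i 0 (-x) (p + s) t p := by
  constructor
  · rintro ⟨u, hu, h1, h2, h3⟩
    obtain ⟨i, hi, t, ht, r⟩ := (h u).1 hu
    exact ⟨i, hi, t, ht, u, r, by omega, by omega, by omega⟩
  · rintro ⟨i, hi, t, ht, u, r, h1, h2, h3⟩
    exact ⟨u, (h u).2 ⟨i, hi, t, ht, r⟩, by omega, by omega, by omega⟩

theorem per_x_p {L : Set F} (hL : IsRat L) : ∃ N n : ℤ, 0 ≤ N ∧ 1 ≤ n ∧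
    (∀ p s, 0 ≤ p → 0 ≤ s → Per (fun x => Mem L x p s) N n) ∧
    (∀ x s, 0 ≤ x → 0 ≤ s → Per (fun p => Mem L x p s) N n) := by
  obtain ⟨Q, _, E, I, T, h⟩ := recognized_of_isRat hL
  obtain ⟨N₁, n₁, hN₁, hn₁, H₁⟩ := walk_period_x E
  obtain ⟨N₂, n₂, hN₂, hn₂, H₂⟩ := walk_period_p E
  have hn : 1 ≤ n₁ * n₂ := by nlinarith
  refine ⟨max N₁ N₂, n₁ * n₂, by omega, hn, fun p s hp _ => ?_, fun x s hx _ => ?_⟩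
  · refine Per.mono (N := N₁) (n := n₁) ?_ hn₁ (by omega) hn (Dvd.intro _ rfl)
    intro x hx
    simp only [mem_iff_walk h]
    simp only [H₁ x hx _ _ _ p hp]
  · refine Per.mono (N := N₂) (n := n₂) ?_ hn₂ (by omega) hn (Dvd.intro_left _ rfl)
    intro p hp
    simp only [mem_iff_walk h]
    simp only [H₂ p hp x s _ _ hx]

/-! ### The two anti-automorphisms -/

theorem isRat_image {f : F → F} (h1 : f 1 = 1) (hm : ∀ u v, f (u * v) = f v * f u)
    {L : Set F} (hL : IsRat L) : IsRat (f '' L) := by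
  have himg : ∀ S T : Set F, f '' (S * T) = f '' T * f '' S := by
    intro S T
    ext z
    constructor
    · rintro ⟨_, ⟨u, hu, v, hv, rfl⟩, rfl⟩
      exact ⟨f v, ⟨v, hv, rfl⟩, f u, ⟨u, hu, rfl⟩, (hm u v).symm⟩
    · rintro ⟨_, ⟨v, hv, rfl⟩, _, ⟨u, hu, rfl⟩, rfl⟩
      exact ⟨u * v, ⟨u, hu, v, hv, rfl⟩, hm u v⟩
  induction hL with
  | finite S hS => exact .finite _ (hS.image f)
  | union S T _ _ h1 h2 => rw [Set.image_union]; exact .union _ _ h1 h2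
  | mul S T _ _ h1 h2 => rw [himg]; exact .mul _ _ h2 h1
  | star S _ h =>
    have : ∀ k : ℕ, f '' (S ^ k) = (f '' S) ^ k := by
      intro k
      induction k with
      | zero => rw [pow_zero, pow_zero, ← Set.singleton_one, Set.image_singleton, h1]
      | succ k ih => rw [pow_succ, himg, ih, pow_succ']
    rw [Set.image_iUnion]
    simp only [this]
    exact .star _ h

theorem inv_inv' (u : F) : inv (inv u) = u := by ext <;> simp [inv]

theorem isRat_inv {L : Set F} (hL : IsRat L) : IsRat (inv '' L) :=
  isRat_image (by ext <;> simp [inv]) (fun u v => by ext <;> simp [inv] <;> omega) hL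

/-- The anti-automorphism of `F` fixing `a` and `a⁻¹`, that is, reversal of words. -/
def rev (u : F) : F := ⟨u.p - u.r, u.p, u.p - u.l,
  by have := u.hpr; omega, by have := u.hlp; omega,
  by have := u.hr; omega, by have := u.hl; omega⟩

theorem isRat_rev {L : Set F} (hL : IsRat L) : IsRat (rev '' L) :=
  isRat_image (by ext <;> simp [rev]) (fun u v => by ext <;> simp [rev] <;> omega) hL

theorem mem_rev (L : Set F) (x p s : ℤ) : Mem (rev '' L) x p s ↔ Mem L s p x := by
  constructor
  · rintro ⟨_, ⟨u, hu, rfl⟩, h1, h2, h3⟩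
    simp only [rev] at h1 h2 h3
    exact ⟨u, hu, by omega, by omega, by omega⟩
  · rintro ⟨u, hu, h1, h2, h3⟩
    refine ⟨rev u, ⟨u, hu, rfl⟩, ?_, ?_, ?_⟩ <;> simp only [rev] <;> omega

theorem exists_uper {L : Set F} (hL : IsRat L) : ∃ N n : ℤ, 0 ≤ N ∧ 1 ≤ n ∧ UPer L N n := by
  obtain ⟨N₁, n₁, hN₁, hn₁, H₁, H₂⟩ := per_x_p hL
  obtain ⟨N₂, n₂, hN₂, hn₂, H₃, -⟩ := per_x_p (isRat_rev hL)
  have hn : 1 ≤ n₁ * n₂ := by nlinarith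
  refine ⟨max N₁ N₂, n₁ * n₂, by omega, hn, fun p s hp hs => ?_, fun x s hx hs => ?_,
    fun x p hx hp => ?_⟩
  · exact (H₁ p s hp hs).mono hn₁ (by omega) hn (Dvd.intro _ rfl)
  · exact (H₂ x s hx hs).mono hn₁ (by omega) hn (Dvd.intro _ rfl)
  · have := (H₃ p x hp hx).mono hn₂ (le_max_right N₁ N₂) hn (Dvd.intro_left _ rfl)
    simpa only [mem_rev] using this

/-! ### The map `η` and the normal form -/

/-- The map `η_{n,n'}` on `m ≥ 0`: `m` itself if `m < n'`, and otherwise the largest `i ≤ n' - 1`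
with `i ≡ m (mod n)`. -/
def etaNat (n n' m : ℤ) : ℤ := if m < n' then m else n' - 1 - (n' - 1 - m) % n

/-- The map `η_{n,n'}`, extended to `ℤ` as an odd function. -/
def eta (n n' m : ℤ) : ℤ := if 0 ≤ m then etaNat n n' m else -etaNat n n' (-m)

theorem etaNat_bounds {n n' : ℤ} (hn : 1 ≤ n) (hnn : n ≤ n') {m : ℤ} (hm : 0 ≤ m) :
    0 ≤ etaNat n n' m ∧ etaNat n n' m < n' := by
  have h1 := Int.emod_nonneg (n' - 1 - m) (by omega : n ≠ 0)
  have h2 := Int.emod_lt_of_pos (n' - 1 - m) (by omega : 0 < n)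
  unfold etaNat
  split_ifs <;> omega

theorem eta_of_nonneg {n n' m : ℤ} (hm : 0 ≤ m) : eta n n' m = etaNat n n' m := if_pos hm

theorem eta_neg {n n' : ℤ} (hn' : 1 ≤ n') {m : ℤ} (hm : 0 ≤ m) :
    eta n n' (-m) = -etaNat n n' m := by
  unfold eta
  split_ifs with h
  · obtain rfl : m = 0 := by omega
    simp [etaNat]
    omega
  · simp

theorem etaSpec_eta {n n' : ℤ} (hn : 1 ≤ n) (hnn : n ≤ n') : EtaSpec n n' (eta n n') := by
  refine ⟨fun m h0 h1 => ?_, fun m hm => ?_, fun m hm => ?_⟩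
  · rw [eta_of_nonneg h0, etaNat, if_pos h1]
  · have hb := etaNat_bounds hn hnn (by omega : 0 ≤ m)
    rw [eta_of_nonneg (by omega)]
    have h2 := Int.emod_lt_of_pos (n' - 1 - m) (by omega : 0 < n)
    have hdiv := Int.emod_add_mul_ediv (n' - 1 - m) n
    have e : etaNat n n' m = n' - 1 - (n' - 1 - m) % n := by rw [etaNat, if_neg (by omega)]
    have hmod : etaNat n n' m ≡ m [ZMOD n] := by
      rw [Int.modEq_iff_dvd, e]
      exact ⟨-((n' - 1 - m) / n), by linarith⟩
    refine ⟨⟨hb.1, by omega, hmod⟩, ?_⟩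
    rintro i ⟨i0, i1, i2⟩
    obtain ⟨c, hc⟩ := (i2.trans hmod.symm).symm.dvd
    -- a larger `i` would exceed `etaNat n n' m ≥ n' - n` by at least `n`
    by_contra hlt
    have : 1 ≤ c := by
      by_contra hc0
      nlinarith
    nlinarith
  · rw [eta_neg (by omega) hm, eta_of_nonneg hm]

theorem Per.etaNat_iff {P : ℤ → Prop} {N n n' : ℤ} (h : Per P N n) (hn : 1 ≤ n)
    (hN : N + n ≤ n') (m : ℤ) : P (etaNat n n' m) ↔ P m := by
  unfold etaNat
  split_ifs with hm
  · rfl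
  · have h2 := Int.emod_lt_of_pos (n' - 1 - m) (by omega : 0 < n)
    have h3 := Int.emod_nonneg (n' - 1 - m) (by omega : n ≠ 0)
    have hdiv := Int.emod_add_mul_ediv (n' - 1 - m) n
    have hq : 0 ≤ -((n' - 1 - m) / n) := by
      by_contra hc
      nlinarith
    obtain ⟨k, hk⟩ := Int.eq_ofNat_of_zero_le hq
    rw [h.add_mul hn k (by omega)]
    have : n' - 1 - (n' - 1 - m) % n + k * n = m := by
      rw [← hk]
      linarith
    rw [this]

theorem UPer.etaNat_iff {L : Set F} {N n n' : ℤ} (h : UPer L N n) (hn : 1 ≤ n) (hN0 : 0 ≤ N)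
    (hN : N + n ≤ n') {x p s : ℤ} (hx : 0 ≤ x) (hp : 0 ≤ p) (hs : 0 ≤ s) :
    Mem L (etaNat n n' x) (etaNat n n' p) (etaNat n n' s) ↔ Mem L x p s := by
  have hx' := (etaNat_bounds hn (by omega : n ≤ n') hx).1
  have hp' := (etaNat_bounds hn (by omega : n ≤ n') hp).1
  rw [(h.2.2 _ _ hx' hp').etaNat_iff hn hN, (h.2.1 _ _ hx' hs).etaNat_iff hn hN,
    (h.1 _ _ hp hs).etaNat_iff hn hN]

/-- The part of `L` in `F⁺` is the inverse image under `ζ_{n,n'}` of `L ∩ W_{n'}`. -/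
theorem UPer.normal_form {L : Set F} {N n n' : ℤ} (h : UPer L N n) (hn : 1 ≤ n) (hN0 : 0 ≤ N)
    (hN : N + n ≤ n') {u : F} (hu : 0 ≤ u.p) :
    u ∈ L ↔ ∃ v : F, ZetaRel (eta n n') u v ∧ v ∈ {v : F | InW n' v ∧ v ∈ L} := by
  have a1 := u.hl
  have a2 := u.hpr
  have bl := etaNat_bounds hn (by omega : n ≤ n') (by omega : 0 ≤ -u.l)
  have bp := etaNat_bounds hn (by omega : n ≤ n') hu
  have bs := etaNat_bounds hn (by omega : n ≤ n') (by omega : 0 ≤ u.r - u.p)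
  have el : eta n n' u.l = -etaNat n n' (-u.l) := by
    have := eta_neg (n := n) (by omega : 1 ≤ n') (by omega : 0 ≤ -u.l)
    rwa [neg_neg] at this
  have ep : eta n n' u.p = etaNat n n' u.p := eta_of_nonneg hu
  have es : eta n n' (u.r - u.p) = etaNat n n' (u.r - u.p) := eta_of_nonneg (by omega)
  have key := h.etaNat_iff hn hN0 hN (by omega : 0 ≤ -u.l) hu (by omega : 0 ≤ u.r - u.p)
  rw [mem_coord] at key
  have hv : ∀ v : F, ZetaRel (eta n n') u v → (v ∈ L ↔ u ∈ L) := by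
    rintro v ⟨h1, h2, h3⟩
    rw [← key, ← mem_coord L v, h1, h3, h2, el, ep, es, neg_neg]
  constructor
  · intro huL
    have hz : ZetaRel (eta n n') u ⟨-etaNat n n' (-u.l), etaNat n n' u.p,
        etaNat n n' u.p + etaNat n n' (u.r - u.p), by omega, by omega, by omega, by omega⟩ := by
      refine ⟨el.symm, ep.symm, ?_⟩
      rw [es]
      exact add_sub_cancel_left _ _
    refine ⟨_, hz, ?_, (hv _ hz).2 huL⟩
    refine ⟨?_, ?_, ?_, ?_⟩ <;> dsimp only <;> omega
  · rintro ⟨v, hz, -, hvL⟩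
    exact (hv v hz).1 hvL

end F

/-- Let `L` be a rational subset of `F`.  Then there are integers
`n' ≥ n ≥ 1` and subsets `W, W' ⊆ W_{n'}` such that
`L = {u ∈ F⁺ : ζ_{n,n'}(u) ∈ W} ∪ {u ∈ F : u⁻¹ ∈ F⁺ and ζ_{n,n'}(u⁻¹) ∈ W'}`
(with `ζ_{n,n'}` expressed through the relation `ZetaRel η`, `η` satisfying `EtaSpec`). -/
theorem rational_normal_form (L : Set F) (hL : F.IsRat L) :
    ∃ (n n' : ℤ) (η : ℤ → ℤ) (W W' : Set F), 1 ≤ n ∧ n ≤ n' ∧ EtaSpec n n' η ∧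
      W ⊆ {u : F | InW n' u} ∧ W' ⊆ {u : F | InW n' u} ∧
      (∀ u : F, u ∈ L ↔
        ((0 ≤ u.p ∧ ∃ v : F, ZetaRel η u v ∧ v ∈ W) ∨
         (0 ≤ (F.inv u).p ∧ ∃ v : F, ZetaRel η (F.inv u) v ∧ v ∈ W'))) := by
  obtain ⟨N₁, n₁, hN₁, hn₁, H₁⟩ := F.exists_uper hL
  obtain ⟨N₂, n₂, hN₂, hn₂, H₂⟩ := F.exists_uper (F.isRat_inv hL)
  have hn : 1 ≤ n₁ * n₂ := by nlinarith
  have U₁ := H₁.mono hn₁ (le_max_left N₁ N₂) hn (Dvd.intro _ rfl)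
  have U₂ := H₂.mono hn₂ (le_max_right N₁ N₂) hn (Dvd.intro_left _ rfl)
  have hN : 0 ≤ max N₁ N₂ := by omega
  refine ⟨n₁ * n₂, max N₁ N₂ + n₁ * n₂, F.eta (n₁ * n₂) (max N₁ N₂ + n₁ * n₂),
    {v | InW (max N₁ N₂ + n₁ * n₂) v ∧ v ∈ L},
    {v | InW (max N₁ N₂ + n₁ * n₂) v ∧ v ∈ F.inv '' L}, hn, by omega,
    F.etaSpec_eta hn (by omega), fun _ h => h.1, fun _ h => h.1, fun u => ?_⟩
  have hinv : u ∈ L ↔ F.inv u ∈ F.inv '' L := by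
    constructor
    · exact fun h => ⟨u, h, rfl⟩
    · rintro ⟨v, hv, e⟩
      rwa [← F.inv_inv' u, ← e, F.inv_inv']
  constructor
  · intro hu
    by_cases hp : 0 ≤ u.p
    · exact .inl ⟨hp, (U₁.normal_form hn hN le_rfl hp).1 hu⟩
    · have hp' : 0 ≤ (F.inv u).p := by
        simp only [F.inv]
        omega
      exact .inr ⟨hp', (U₂.normal_form hn hN le_rfl hp').1 (hinv.1 hu)⟩
  · rintro (⟨hp, h⟩ | ⟨hp, h⟩)
    · exact (U₁.normal_form hn hN le_rfl hp).2 h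
    · exact hinv.2 ((U₂.normal_form hn hN le_rfl hp).2 h)
end

section
/- The set L = F·aa⁻¹ = {u ∈ F : uπ < uρ} is a rational subset of F, but its complement F ∖ L = {u ∈ F : uπ = uρ} is not a rational subset of F. In particular, the family of rational subsets of F is not closed under complementation. -/
/-!
The set `{u | u.p < u.r}` equals `F·aa⁻¹`, and `F` itself is the product `a*·(a⁻¹)*·a*`: the element
`(l, p, r)` is reached by climbing to `r`, descending to `l` and climbing back to `p`.  Hence the set
is rational.

Its complement is handled by an invariant of rational sets: if `u.p` is bounded below on a rational
set `S`, then so is `u.l` (`IsRat.bddBelow_l`).  Everything but the star is routine; if `p` is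
bounded below on `S*`, then `p ≥ 0` on `S`, since otherwise powers of a single element would push `p`
to `-∞`, and then multiplication cannot lower `l` below a nonpositive bound valid on `S`.  On `{u | u.p = u.r}`
one has `u.p ≥ 0`, but the elements `(-n, 0, 0)` make `l` unbounded below.
-/

open Pointwise

namespace F

theorem pow_p (u : F) (n : ℕ) : (u ^ n).p = n * u.p := by
  induction n with
  | zero => simp
  | succ n ih => rw [pow_succ, mul_p, ih]; push_cast; ring

theorem a_pow (n : ℕ) : (a ^ n).l = 0 ∧ (a ^ n).p = n ∧ (a ^ n).r = n := by
  induction n with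
  | zero => simp
  | succ n ih =>
    obtain ⟨h1, h2, h3⟩ := ih
    rw [pow_succ, mul_l, mul_p, mul_r, h1, h2, h3]
    simp only [a]
    push_cast
    omega

theorem ainv_pow (n : ℕ) : (ainv ^ n).l = -n ∧ (ainv ^ n).p = -n ∧ (ainv ^ n).r = 0 := by
  induction n with
  | zero => simp
  | succ n ih =>
    obtain ⟨h1, h2, h3⟩ := ih
    rw [pow_succ, mul_l, mul_p, mul_r, h1, h2, h3]
    simp only [ainv]
    push_cast
    omega

theorem eq_pow_mul (u : F) :
    a ^ u.r.toNat * ainv ^ (u.r - u.l).toNat * a ^ (u.p - u.l).toNat = u := by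
  have h1 := u.hl
  have h2 := u.hr
  have h3 := u.hlp
  have h4 := u.hpr
  obtain ⟨x1, x2, x3⟩ := a_pow u.r.toNat
  obtain ⟨y1, y2, y3⟩ := ainv_pow (u.r - u.l).toNat
  obtain ⟨z1, z2, z3⟩ := a_pow (u.p - u.l).toNat
  ext <;> simp only [mul_l, mul_p, mul_r, x1, x2, x3, y1, y2, y3, z1, z2, z3] <;> omega

theorem isRat_univ : IsRat Set.univ := by
  have key : (Set.univ : Set F) =
      (⋃ k : ℕ, ({a} : Set F) ^ k) * (⋃ k : ℕ, ({ainv} : Set F) ^ k) *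
        (⋃ k : ℕ, ({a} : Set F) ^ k) := by
    refine (Set.eq_univ_of_forall fun u => ?_).symm
    rw [← eq_pow_mul u]
    have mem (x : F) (n : ℕ) : x ^ n ∈ ⋃ k : ℕ, ({x} : Set F) ^ k :=
      Set.mem_iUnion.2 ⟨n, Set.pow_mem_pow (Set.mem_singleton x)⟩
    exact Set.mul_mem_mul (Set.mul_mem_mul (mem _ _) (mem _ _)) (mem _ _)
  rw [key]
  have st (x : F) : IsRat (⋃ k : ℕ, ({x} : Set F) ^ k) :=
    .star _ (.finite _ (Set.finite_singleton x))
  exact .mul _ _ (.mul _ _ (st a) (st ainv)) (st a)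

theorem lt_eq :
    {u : F | u.p < u.r} = {u : F | ∃ x : F, x * (a * ainv) = u} := by
  ext u
  simp only [Set.mem_ofPred_eq]
  constructor
  · intro h
    have h1 := u.hlp
    have h2 := u.hpr
    have h3 := u.hl
    have h4 := u.hr
    refine ⟨u, ?_⟩
    ext <;> simp [a, ainv] <;> omega
  · rintro ⟨x, rfl⟩
    simp [a, ainv]

theorem isRat_lt : IsRat {u : F | u.p < u.r} := by
  have key : {u : F | u.p < u.r} = Set.univ * {a * ainv} := by
    rw [lt_eq]
    ext u
    simp
  rw [key]
  exact .mul _ _ isRat_univ (.finite _ (Set.finite_singleton _))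

/-- The invariant of rational sets separating them from `{u | u.p = u.r}`: on a rational set, a lower
bound for `p` forces one for `l`. -/
theorem IsRat.bddBelow_l {S : Set F} (hS : IsRat S) :
    (∃ B : ℤ, ∀ u ∈ S, B ≤ u.p) → ∃ B : ℤ, ∀ u ∈ S, B ≤ u.l := by
  induction hS with
  | finite S hS =>
    intro _
    obtain ⟨B, hB⟩ := (hS.image F.l).bddBelow
    exact ⟨B, fun u hu => hB ⟨u, hu, rfl⟩⟩
  | union S T _ _ ihS ihT =>
    rintro ⟨B, hB⟩
    obtain ⟨C, hC⟩ := ihS ⟨B, fun u hu => hB u (Or.inl hu)⟩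
    obtain ⟨D, hD⟩ := ihT ⟨B, fun u hu => hB u (Or.inr hu)⟩
    refine ⟨min C D, ?_⟩
    rintro u (hu | hu)
    · exact (min_le_left _ _).trans (hC u hu)
    · exact (min_le_right _ _).trans (hD u hu)
  | mul S T _ _ ihS ihT =>
    rintro ⟨B, hB⟩
    rcases S.eq_empty_or_nonempty with rfl | ⟨s, hs⟩
    · exact ⟨0, by simp⟩
    rcases T.eq_empty_or_nonempty with rfl | ⟨t, ht⟩
    · exact ⟨0, by simp⟩
    -- Fixing an element of one factor bounds `p` below on the other.
    have hBS : ∀ u ∈ S, B - t.p ≤ u.p := fun u hu => by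
      have := hB _ (Set.mul_mem_mul hu ht)
      rw [mul_p] at this
      omega
    have hBT : ∀ u ∈ T, B - s.p ≤ u.p := fun u hu => by
      have := hB _ (Set.mul_mem_mul hs hu)
      rw [mul_p] at this
      omega
    obtain ⟨C, hC⟩ := ihS ⟨_, hBS⟩
    obtain ⟨D, hD⟩ := ihT ⟨_, hBT⟩
    refine ⟨min C (B - t.p + D), ?_⟩
    rintro _ ⟨u, hu, v, hv, rfl⟩
    have h1 := hC u hu
    have h2 := hD v hv
    have h3 := hBS u hu
    simp only [mul_l]
    omega
  | star S _ ih =>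
    rintro ⟨B, hB⟩
    have hp : ∀ u ∈ S, 0 ≤ u.p := by
      intro u hu
      by_contra! hneg
      -- If `p ≤ -1` at `u`, then the power `|B| + 1` of `u` violates the bound `B`.
      have h := hB (u ^ (B.natAbs + 1)) (Set.mem_iUnion.2 ⟨_, Set.pow_mem_pow hu⟩)
      rw [pow_p] at h
      have h1 : ((B.natAbs + 1 : ℕ) : ℤ) * u.p ≤ ((B.natAbs + 1 : ℕ) : ℤ) * (-1) :=
        mul_le_mul_of_nonneg_left (by omega) (by omega)
      omega
    obtain ⟨C, hC⟩ := ih ⟨0, hp⟩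
    have hk : ∀ k : ℕ, ∀ u ∈ S ^ k, 0 ≤ u.p ∧ min C 0 ≤ u.l := by
      intro k
      induction k with
      | zero =>
        intro u hu
        rw [pow_zero, Set.mem_one] at hu
        subst hu
        simp
      | succ k ihk =>
        intro u hu
        rw [pow_succ] at hu
        obtain ⟨x, hx, y, hy, rfl⟩ := hu
        obtain ⟨h1, h2⟩ := ihk x hx
        have h3 := hp y hy
        have h4 := hC y hy
        simp only [mul_l, mul_p]
        omega
    refine ⟨min C 0, fun u hu => ?_⟩
    obtain ⟨k, hu⟩ := Set.mem_iUnion.1 hu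
    exact (hk k u hu).2

theorem not_isRat_eq : ¬ IsRat {u : F | u.p = u.r} := by
  intro h
  obtain ⟨B, hB⟩ := h.bddBelow_l ⟨0, fun u hu => by
    have h1 : u.p = u.r := hu
    have h2 := u.hr
    omega⟩
  have := hB ⟨-(B.natAbs + 1 : ℤ), 0, 0, by omega, le_rfl, by omega, le_rfl⟩ rfl
  simp only at this
  omega

theorem eq_compl_lt : {u : F | u.p = u.r} = {u : F | u.p < u.r}ᶜ := by
  ext u
  have h := u.hpr
  simp only [Set.mem_ofPred_eq, Set.mem_compl_iff]
  omega

end F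

/-- The set `L = F·aa⁻¹ = {u ∈ F : uπ < uρ}` is a rational subset of
`F`, but its complement `F ∖ L = {u ∈ F : uπ = uρ}` is not.  In particular, the family of
rational subsets of `F` is not closed under complementation. -/
theorem rational_not_closed_under_complement :
    ({u : F | u.p < u.r} = {u : F | ∃ x : F, x * (F.a * F.ainv) = u}) ∧
    F.IsRat {u : F | u.p < u.r} ∧
    ({u : F | u.p = u.r} = {u : F | u.p < u.r}ᶜ) ∧
    ¬ F.IsRat {u : F | u.p = u.r} ∧
    (∃ S : Set F, F.IsRat S ∧ ¬ F.IsRat Sᶜ) := by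
  refine ⟨F.lt_eq, F.isRat_lt, F.eq_compl_lt, F.not_isRat_eq, _, F.isRat_lt, ?_⟩
  rw [← F.eq_compl_lt]
  exact F.not_isRat_eq
end
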